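/- Let α, β, κ : ℝ → ℝ be smooth 2π-periodic functions, and suppose g, h : ℝ → ℝ are smooth 2π-periodic functions with g_s = (1/2) α_sss + 2 κ α_s + κ_s α and h_s = (1/2) β_sss + 2 κ β_s + κ_s β. Then ∫₀^{2π} α ((1/2) h_sss + 2 κ h_s + κ_s h) ds = ∫₀^{2π} g h_s ds. In particular this expression is skew-symmetric under interchanging (α,g) and (β,h). -/

import Mathlib

/-- The derivative of a `C¹` periodic function integrates to zero over a period. -/
theorem integral_eq_zero_of_hasDerivAt_periodic {F f : ℝ → ℝ} {T : ℝ}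
    (hF : ∀ s, HasDerivAt F (f s) s) (hf : Continuous f) (hper : Function.Periodic F T) :
    ∫ s in (0 : ℝ)..T, f s = 0 := by
  rw [intervalIntegral.integral_eq_sub_of_hasDerivAt (fun s _ => hF s)
    (hf.intervalIntegrable _ _), hper.eq, sub_self]

/-- The derivative of a periodic function is periodic. -/
theorem Function.Periodic.deriv_real {f : ℝ → ℝ} {T : ℝ} (hf : Function.Periodic f T) :
    Function.Periodic (deriv f) T := fun s => by
  rw [← deriv_comp_add_const, show (fun x => f (x + T)) = f from funext hf]

/-- Integration by parts for periodic functions, without boundary terms. -/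
theorem integral_mul_deriv_eq_neg_of_periodic {u v : ℝ → ℝ} {T : ℝ}
    (hu : ContDiff ℝ 1 u) (hv : ContDiff ℝ 1 v)
    (hup : Function.Periodic u T) (hvp : Function.Periodic v T) :
    ∫ s in (0 : ℝ)..T, u s * deriv v s = -∫ s in (0 : ℝ)..T, v s * deriv u s := by
  have hu' := hu.continuous_deriv_one
  have hv' := hv.continuous_deriv_one
  have hu0 := hu.continuous
  have hv0 := hv.continuous
  rw [eq_neg_iff_add_eq_zero, ← intervalIntegral.integral_add
    (Continuous.intervalIntegrable (by fun_prop) _ _)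
    (Continuous.intervalIntegrable (by fun_prop) _ _)]
  refine integral_eq_zero_of_hasDerivAt_periodic (F := fun s => u s * v s) (fun s => ?_)
    (by fun_prop) (hup.mul hvp)
  exact (((hu.differentiable one_ne_zero s).hasDerivAt).mul
    ((hv.differentiable one_ne_zero s).hasDerivAt)).congr_deriv (by ring)

/-- The operator `(1/2) D³ + 2 κ D + κ'` is skew-adjoint on periodic functions. -/
theorem integral_mul_kdv_operator_eq_neg {u v κ : ℝ → ℝ} {T : ℝ}
    (hu : ContDiff ℝ 3 u) (hv : ContDiff ℝ 3 v) (hκ : ContDiff ℝ 1 κ)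
    (hup : Function.Periodic u T) (hvp : Function.Periodic v T) (hκp : Function.Periodic κ T) :
    ∫ s in (0 : ℝ)..T,
        u s * ((1 / 2) * deriv (deriv (deriv v)) s + 2 * κ s * deriv v s + deriv κ s * v s)
      = -∫ s in (0 : ℝ)..T,
        v s * ((1 / 2) * deriv (deriv (deriv u)) s + 2 * κ s * deriv u s + deriv κ s * u s) := by
  have hu1 : ContDiff ℝ 2 (deriv u) := hu.deriv'
  have hu2 : ContDiff ℝ 1 (deriv (deriv u)) := hu1.deriv'
  have hv1 : ContDiff ℝ 2 (deriv v) := hv.deriv'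
  have hv2 : ContDiff ℝ 1 (deriv (deriv v)) := hv1.deriv'
  have cu := hu.continuous
  have cu1 := hu1.continuous
  have cu3 := hu2.continuous_deriv_one
  have cv := hv.continuous
  have cv1 := hv1.continuous
  have cv3 := hv2.continuous_deriv_one
  have cκ := hκ.continuous
  have cκ1 := hκ.continuous_deriv_one
  rw [eq_neg_iff_add_eq_zero, ← intervalIntegral.integral_add
    (Continuous.intervalIntegrable (by fun_prop) _ _)
    (Continuous.intervalIntegrable (by fun_prop) _ _)]
  refine integral_eq_zero_of_hasDerivAt_periodic
    (F := fun s => (1 / 2) * (u s * deriv (deriv v) s + v s * deriv (deriv u) s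
      - deriv u s * deriv v s) + 2 * (κ s * (u s * v s))) (fun s => ?_) (by fun_prop) ?_
  · have du := (hu.differentiable (by norm_num) s).hasDerivAt
    have du1 := (hu1.differentiable (by norm_num) s).hasDerivAt
    have du2 := (hu2.differentiable (by norm_num) s).hasDerivAt
    have dv := (hv.differentiable (by norm_num) s).hasDerivAt
    have dv1 := (hv1.differentiable (by norm_num) s).hasDerivAt
    have dv2 := (hv2.differentiable (by norm_num) s).hasDerivAt
    have dκ := (hκ.differentiable (by norm_num) s).hasDerivAt
    exact (((((du.mul dv2).add (dv.mul du2)).sub (du1.mul dv1)).const_mul (1 / 2)).add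
      ((dκ.mul (du.mul dv)).const_mul 2)).congr_deriv (by simp only [Pi.mul_apply]; ring)
  · intro s
    simp only [hup s, hvp s, hκp s, hup.deriv_real s, hvp.deriv_real s,
      hup.deriv_real.deriv_real s, hvp.deriv_real.deriv_real s]

/-- with 2π-periodic antiderivatives `g = D_s⁻¹ Ω α_s` and `h = D_s⁻¹ Ω β_s`
(`g_s = (1/2) α_sss + 2 κ α_s + κ_s α`, `h_s = (1/2) β_sss + 2 κ β_s + κ_s β`),
one has `∫₀^{2π} α Ω h_s ds = ∫₀^{2π} g h_s ds`, and this expression is skew-symmetric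
under interchanging `(α, g)` and `(β, h)`. -/
theorem omega2_formula_and_skew
    (α β κ g h : ℝ → ℝ)
    (hα : ContDiff ℝ (⊤ : ℕ∞) α)
    (hβ : ContDiff ℝ (⊤ : ℕ∞) β)
    (hκ : ContDiff ℝ (⊤ : ℕ∞) κ)
    (hg : ContDiff ℝ (⊤ : ℕ∞) g)
    (hh : ContDiff ℝ (⊤ : ℕ∞) h)
    (hαper : ∀ s, α (s + 2 * Real.pi) = α s)
    (hβper : ∀ s, β (s + 2 * Real.pi) = β s)
    (hκper : ∀ s, κ (s + 2 * Real.pi) = κ s)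
    (hgper : ∀ s, g (s + 2 * Real.pi) = g s)
    (hhper : ∀ s, h (s + 2 * Real.pi) = h s)
    (hgs : ∀ s, deriv g s =
      (1 / 2) * deriv (deriv (deriv α)) s + 2 * κ s * deriv α s + deriv κ s * α s)
    (hhs : ∀ s, deriv h s =
      (1 / 2) * deriv (deriv (deriv β)) s + 2 * κ s * deriv β s + deriv κ s * β s) :
    (∫ s in (0 : ℝ)..(2 * Real.pi),
        α s * ((1 / 2) * deriv (deriv (deriv h)) s + 2 * κ s * deriv h s + deriv κ s * h s)
      = ∫ s in (0 : ℝ)..(2 * Real.pi), g s * deriv h s)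
    ∧ (∫ s in (0 : ℝ)..(2 * Real.pi),
        α s * ((1 / 2) * deriv (deriv (deriv h)) s + 2 * κ s * deriv h s + deriv κ s * h s)
      = - ∫ s in (0 : ℝ)..(2 * Real.pi),
          β s * ((1 / 2) * deriv (deriv (deriv g)) s + 2 * κ s * deriv g s + deriv κ s * g s)) := by
  have toC : ∀ {f : ℝ → ℝ} (n : ℕ), ContDiff ℝ (⊤ : ℕ∞) f → ContDiff ℝ n f :=
    fun n hf => contDiff_infty.1 hf n
  have hαh := integral_mul_kdv_operator_eq_neg (toC 3 hα) (toC 3 hh) (toC 1 hκ) hαper hhper hκper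
  have hβg := integral_mul_kdv_operator_eq_neg (toC 3 hβ) (toC 3 hg) (toC 1 hκ) hβper hgper hκper
  have hgh := integral_mul_deriv_eq_neg_of_periodic (toC 1 hg) (toC 1 hh) hgper hhper
  simp only [← hgs] at hαh
  simp only [← hhs] at hβg
  have hformula := hαh.trans hgh.symm
  exact ⟨hformula, by rw [hformula, hβg, neg_neg]⟩
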